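/- Let E′ ⊂ E ⊂ X be two sets that have finite perimeter in an open set W ⊂ X. Let ε ≥ 0 and let {w_i}_{i=1}^∞ be a sequence of locally Lipschitz functions on W such that w_i → χ_E in L^1_loc(W) and liminf_{i→∞} ∫_W g_{w_i} d𝔪 ≤ P(E,W) + ε. Then there exists a sequence {w_i′}_{i=1}^∞ of locally Lipschitz functions on W such that w_i′ ≤ w_i, w_i′ → χ_{E′} in L^1_loc(W), and liminf_{i→∞} ∫_W g_{w_i′} d𝔪 ≤ P(E′,W) + ε. -/

import Mathlib

open MeasureTheory Metric Filter Set ENNReal NNReal Topology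

/-- A curve: a rectifiable continuous map from a compact interval into `X`,
parametrized by arc length (hence `1`-Lipschitz on `[0, len]`). -/
structure Curve (X : Type*) [MetricSpace X] where
  len : ℝ
  len_nonneg : 0 ≤ len
  toFun : ℝ → X
  lipschitzOn : LipschitzOnWith 1 toFun (Set.Icc 0 len)

namespace Curve

variable {X : Type*} [MetricSpace X]

/-- A curve is nonconstant if it attains two distinct values. -/
def IsNonconstant (γ : Curve X) : Prop :=
  ∃ s ∈ Set.Icc (0:ℝ) γ.len, ∃ t ∈ Set.Icc (0:ℝ) γ.len, γ.toFun s ≠ γ.toFun t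

/-- A curve lies in a set `W`. -/
def IsIn (γ : Curve X) (W : Set X) : Prop :=
  ∀ s ∈ Set.Icc (0:ℝ) γ.len, γ.toFun s ∈ W

end Curve

variable {X : Type*} [MetricSpace X] [MeasurableSpace X] [BorelSpace X]

/-- The curve integral `∫_γ g ds` for an arc-length parametrized curve. -/
noncomputable def curveLintegral (g : X → ℝ≥0∞) (γ : Curve X) : ℝ≥0∞ :=
  ∫⁻ s in Set.Icc (0:ℝ) γ.len, g (γ.toFun s)

/-- The upper gradient inequality `|u(x) - u(y)| ≤ ∫_γ g ds` along a curve `γ`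
with endpoints `x, y`. -/
def UpperGradIneq (g : X → ℝ≥0∞) (u : X → ℝ) (γ : Curve X) : Prop :=
  ENNReal.ofReal |u (γ.toFun 0) - u (γ.toFun γ.len)| ≤ curveLintegral g γ

/-- The 1-modulus of a family of curves. -/
noncomputable def mod1 (μ : Measure X) (Γ : Set (Curve X)) : ℝ≥0∞ :=
  ⨅ (ρ : X → ℝ≥0∞) (_ : Measurable ρ ∧ ∀ γ ∈ Γ, 1 ≤ curveLintegral ρ γ),
    ∫⁻ x, ρ x ∂μ

/-- `g` is a 1-weak upper gradient of `u` in `W`: the upper gradient inequality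
holds for all nonconstant curves in `W` outside a family of 1-modulus zero. -/
def IsWeakUpperGradientOn (μ : Measure X) (g : X → ℝ≥0∞) (u : X → ℝ) (W : Set X) : Prop :=
  Measurable g ∧
    mod1 μ {γ : Curve X | γ.IsNonconstant ∧ γ.IsIn W ∧ ¬ UpperGradIneq g u γ} = 0

/-- `g` is a (strong) upper gradient of `u` in `X`. -/
def IsUpperGradient (g : X → ℝ≥0∞) (u : X → ℝ) : Prop :=
  Measurable g ∧ ∀ γ : Curve X, γ.IsNonconstant → UpperGradIneq g u γ

/-- `∫_W g_u dμ`: the integral over `W` of the minimal 1-weak upper gradient of `u`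
in `W`, equivalently the infimum of `∫_W g dμ` over all 1-weak upper gradients `g`
of `u` in `W`. -/
noncomputable def gradEnergy (μ : Measure X) (u : X → ℝ) (W : Set X) : ℝ≥0∞ :=
  ⨅ (g : X → ℝ≥0∞) (_ : IsWeakUpperGradientOn μ g u W), ∫⁻ x in W, g x ∂μ

/-- `u` is locally Lipschitz on `W`. -/
def LocLipschitzOn (u : X → ℝ) (W : Set X) : Prop :=
  ∀ x ∈ W, ∃ K : ℝ≥0, ∃ t ∈ nhdsWithin x W, LipschitzOnWith K u t

/-- Convergence `uᵢ → v` in `L¹_loc(W)`. -/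
def TendstoL1loc (μ : Measure X) (W : Set X) (u : ℕ → X → ℝ) (v : X → ℝ) : Prop :=
  ∀ W' : Set X, IsOpen W' → IsCompact (closure W') → closure W' ⊆ W →
    Tendsto (fun i => ∫⁻ x in W', ENNReal.ofReal |u i x - v x| ∂μ) atTop (𝓝 0)

/-- The total variation `‖Dv‖(W)` of a function `v` in an open set `W`. -/
noncomputable def variationOn (μ : Measure X) (v : X → ℝ) (W : Set X) : ℝ≥0∞ :=
  ⨅ (u : ℕ → X → ℝ) (_ : (∀ i, LocLipschitzOn (u i) W) ∧ TendstoL1loc μ W u v),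
    Filter.liminf (fun i => gradEnergy μ (u i) W) Filter.atTop

/-- The total variation `‖Dv‖(A)` of a function `v` in an arbitrary set `A`. -/
noncomputable def totalVar (μ : Measure X) (v : X → ℝ) (A : Set X) : ℝ≥0∞ :=
  ⨅ (W : Set X) (_ : IsOpen W ∧ A ⊆ W), variationOn μ v W

/-- The perimeter `P(E, A) = ‖Dχ_E‖(A)`. -/
noncomputable def perimeter (μ : Measure X) (E A : Set X) : ℝ≥0∞ :=
  totalVar μ (Set.indicator E fun _ => (1 : ℝ)) A

/-- The measure `μ` is doubling. -/
def IsDoublingMeasure (μ : Measure X) : Prop :=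
  ∃ C : ℝ≥0∞, 1 ≤ C ∧ ∀ (x : X) (r : ℝ), 0 < r → μ (ball x (2 * r)) ≤ C * μ (ball x r)

/-- The space supports a (1,1)-Poincaré inequality:
`⨍_{B(x,r)} |u - u_{B(x,r)}| dμ ≤ C r ⨍_{B(x,λr)} g dμ` for every ball, every
`u ∈ L¹_loc(X)` and every upper gradient `g` of `u` (stated here multiplied
through by the measures of the two balls). -/
def SupportsPoincare (μ : Measure X) : Prop :=
  ∃ C lam : ℝ, 0 < C ∧ 1 ≤ lam ∧
    ∀ (x : X) (r : ℝ), 0 < r → ∀ (u : X → ℝ) (g : X → ℝ≥0∞),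
      (∀ (y : X) (s : ℝ), IntegrableOn u (ball y s) μ) → IsUpperGradient g u →
        μ (ball x (lam * r)) *
            ∫⁻ y in ball x r, ENNReal.ofReal |u y - ⨍ z in ball x r, u z ∂μ| ∂μ ≤
          ENNReal.ofReal (C * r) * μ (ball x r) * ∫⁻ y in ball x (lam * r), g y ∂μ

/-- `(X, d, μ)` is a PI space: complete, doubling, supporting a (1,1)-Poincaré
inequality. -/
def IsPISpace (μ : Measure X) : Prop :=
  CompleteSpace X ∧ IsDoublingMeasure μ ∧ SupportsPoincare μ

/-- A set `E` of finite perimeter is decomposable in a Borel set `D` if there is a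
partition `{F, G}` of `E ∩ D` into sets of finite perimeter in `D`, both of positive
measure, with `P(E,D) = P(F,D) + P(G,D)`. -/
def IsDecomposableIn (μ : Measure X) (E D : Set X) : Prop :=
  ∃ F G : Set X, MeasurableSet F ∧ MeasurableSet G ∧ Disjoint F G ∧ F ∪ G = E ∩ D ∧
    perimeter μ F D < ⊤ ∧ perimeter μ G D < ⊤ ∧ 0 < μ F ∧ 0 < μ G ∧
    perimeter μ E D = perimeter μ F D + perimeter μ G D

/-- `E` is indecomposable in `D`. -/
def IsIndecomposableIn (μ : Measure X) (E D : Set X) : Prop :=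
  ¬ IsDecomposableIn μ E D

/-- `{F i}_{i ∈ I}` is a (finite or countable) partition of `E` into indecomposable
Borel sets of positive measure and finite perimeter whose perimeters sum to `P(E,X)`;
this is the defining property of the essential connected components `𝒞𝒞ᵉ(E)`. -/
def IsEssentialPartition (μ : Measure X) (E : Set X) (I : Set ℕ) (F : ℕ → Set X) : Prop :=
  (∀ i ∈ I, MeasurableSet (F i)) ∧
  (∀ i ∈ I, ∀ j ∈ I, i ≠ j → Disjoint (F i) (F j)) ∧
  (⋃ i ∈ I, F i) = E ∧
  (∀ i ∈ I, 0 < μ (F i)) ∧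
  (∀ i ∈ I, perimeter μ (F i) Set.univ < ⊤) ∧
  (∀ i ∈ I, IsIndecomposableIn μ (F i) Set.univ) ∧
  perimeter μ E Set.univ = ∑' i : I, perimeter μ (F i.1) Set.univ

/-- Given a decomposition `{G i}_{i ∈ I}` of `X ∖ E` into essential connected
components, the saturation of `E`: the union of `E` and its holes, i.e. the
components of finite measure. -/
def saturationOf (μ : Measure X) (E : Set X) (I : Set ℕ) (G : ℕ → Set X) : Set X :=
  E ∪ ⋃ (i : ℕ) (_ : i ∈ I ∧ μ (G i) < ⊤), G i

/-- The measure-theoretic boundary `∂* E`: points where both `E` and its complement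
have strictly positive upper density. -/
def mtBoundary (μ : Measure X) (E : Set X) : Set X :=
  {x : X |
    0 < Filter.limsup (fun r => μ (ball x r ∩ E) / μ (ball x r)) (nhdsWithin 0 (Set.Ioi 0)) ∧
    0 < Filter.limsup (fun r => μ (ball x r \ E) / μ (ball x r)) (nhdsWithin 0 (Set.Ioi 0))}

/-- The restricted codimension-one Hausdorff content `ℋ_R`. -/
noncomputable def codimOneContent (μ : Measure X) (R : ℝ) (A : Set X) : ℝ≥0∞ :=
  ⨅ (s : Set (X × ℝ))
    (_ : s.Countable ∧ (∀ p ∈ s, 0 < p.2 ∧ p.2 ≤ R) ∧ A ⊆ ⋃ p ∈ s, ball p.1 p.2),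
    ∑' p : s, μ (ball (p : X × ℝ).1 (p : X × ℝ).2) / ENNReal.ofReal (p : X × ℝ).2

/-- The codimension-one Hausdorff measure `ℋ(A) = lim_{R → 0} ℋ_R(A)`. -/
noncomputable def codimOneHausdorff (μ : Measure X) (A : Set X) : ℝ≥0∞ :=
  ⨆ (R : ℝ) (_ : 0 < R), codimOneContent μ R A

/-!
Let `uᵢ` be a recovery sequence for `χ_{E'}` and put `w'ᵢ = min(uᵢ, wᵢ)`. Since `E' ⊆ E`, we have
`min(uᵢ, wᵢ) → χ_{E'}` and `max(uᵢ, wᵢ) → χ_E` in `L¹_loc(W)`, while the gradient energy is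
submodular: `𝓔(min(u, v)) + 𝓔(max(u, v)) ≤ 𝓔(u) + 𝓔(v)`. As `max(uᵢ, wᵢ)` costs at least `P(E, W)`
in the limit, replacing `wᵢ` by `w'ᵢ` cannot increase the excess `ε` over the perimeter.

Submodularity comes from a pointwise description of weak upper gradients of finite energy: along
1-almost every curve `γ` they dominate `|(u ∘ γ)'|` almost everywhere. Where `u ≤ v`, the function
`min(u, v) - u` attains its maximum, so `min(u, v) ∘ γ` and `u ∘ γ` have the same derivative there.
Hence weak upper gradients of `u` and `v` may be glued along any measurable partition subordinate to
`{u ≤ v}` and `{v ≤ u}`, with no condition on the coincidence set.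
-/

section RealLine

theorem deriv_eq_deriv_of_isLocalExtr_sub {f g : ℝ → ℝ} {t : ℝ} (hf : DifferentiableAt ℝ f t)
    (hg : DifferentiableAt ℝ g t) (h : IsLocalExtr (f - g) t) : deriv f t = deriv g t := by
  have hderiv := h.deriv_eq_zero
  rwa [deriv_sub hf hg, sub_eq_zero] at hderiv

variable {F : Type*} [NormedAddCommGroup F] [NormedSpace ℝ F]

theorem norm_le_of_eventually_norm_sub_le_of_hasDerivAt {f : ℝ → F} {f' : F} {H : ℝ → ℝ}
    {H' t : ℝ} (hf : HasDerivAt f f' t) (hH : HasDerivAt H H' t)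
    (h : ∀ᶠ s in 𝓝[>] t, ‖f s - f t‖ ≤ H s - H t) : ‖f'‖ ≤ H' := by
  refine le_of_tendsto_of_tendsto
    (((hasDerivAt_iff_tendsto_slope.1 hf).mono_left (nhdsGT_le_nhdsNE t)).norm)
    ((hasDerivAt_iff_tendsto_slope.1 hH).mono_left (nhdsGT_le_nhdsNE t)) ?_
  filter_upwards [h, self_mem_nhdsWithin] with s hs (hts : t < s)
  have hpos : 0 < s - t := sub_pos.2 hts
  rw [slope_def_module, slope_def_field, norm_smul, norm_inv, Real.norm_of_nonneg hpos.le,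
    inv_mul_eq_div]
  gcongr

theorem ae_enorm_deriv_le_of_forall_enorm_sub_le {f : ℝ → F} {g : ℝ → ℝ≥0∞} {a b : ℝ}
    (hg : AEMeasurable g (volume.restrict (Icc a b))) (hfin : ∫⁻ r in Icc a b, g r ≠ ⊤)
    (h : ∀ s t, a ≤ s → s ≤ t → t ≤ b → ‖f t - f s‖ₑ ≤ ∫⁻ r in Icc s t, g r) :
    ∀ᵐ t ∂volume.restrict (Icc a b), ‖deriv f t‖ₑ ≤ g t := by
  obtain hab | hab := lt_or_ge b a
  · simp [Icc_eq_empty_of_lt hab]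
  have hint : IntegrableOn (fun r => (g r).toReal) (Icc a b) :=
    integrable_toReal_of_lintegral_ne_top hg hfin
  have hprimitive :=
    ((intervalIntegrable_iff_integrableOn_Icc_of_le hab).2 hint).ae_hasDerivAt_integral
  have hlt : ∀ᵐ t ∂volume.restrict (Icc a b), g t < ⊤ := ae_lt_top' hg hfin
  have hsub : ∀ s t, a ≤ s → s ≤ t → t ≤ b →
      ‖f t - f s‖ ≤ (∫ r in a..t, (g r).toReal) - ∫ r in a..s, (g r).toReal := by
    intro s t has hst htb
    have hsubset : Icc s t ⊆ Icc a b := Icc_subset_Icc has htb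
    have hle := ENNReal.toReal_mono (ne_top_of_le_ne_top hfin (lintegral_mono_set hsubset))
      (h s t has hst htb)
    rw [toReal_enorm] at hle
    rwa [intervalIntegral.integral_interval_sub_left, intervalIntegral.integral_of_le hst,
      restrict_Ioc_eq_restrict_Icc, integral_toReal (hg.mono_set hsubset)
        (ae_restrict_of_ae_restrict_of_subset hsubset hlt)]
    all_goals
      refine (intervalIntegrable_iff_integrableOn_Icc_of_le (by linarith)).2 (hint.mono_set ?_)
      exact Icc_subset_Icc le_rfl (by linarith)
  rw [← restrict_Ioo_eq_restrict_Icc] at hlt ⊢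
  filter_upwards [hlt, ae_restrict_of_ae hprimitive, ae_restrict_mem measurableSet_Ioo]
    with t ht hderiv htab
  by_cases hf : DifferentiableAt ℝ f t
  swap
  · simp [deriv_zero_of_not_differentiableAt hf]
  rw [uIcc_of_le hab] at hderiv
  have hnorm := norm_le_of_eventually_norm_sub_le_of_hasDerivAt hf.hasDerivAt
    (hderiv (Ioo_subset_Icc_self htab) a (left_mem_Icc.2 hab)) ?_
  · rw [← ofReal_norm]
    exact (ENNReal.ofReal_le_iff_le_toReal ht.ne).2 hnorm
  · filter_upwards [Ioo_mem_nhdsGT htab.2] with s hs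
    exact hsub t s htab.1.le hs.1.le hs.2.le

theorem enorm_sub_le_lintegral_enorm_deriv {f : ℝ → ℝ} {a b : ℝ} (hab : a ≤ b)
    (hf : AbsolutelyContinuousOnInterval f a b) :
    ‖f b - f a‖ₑ ≤ ∫⁻ t in Icc a b, ‖deriv f t‖ₑ := by
  rw [← hf.integral_deriv_eq_sub, intervalIntegral.integral_of_le hab,
    restrict_Ioc_eq_restrict_Icc]
  exact enorm_integral_le_lintegral_enorm _

end RealLine

section Curves

variable {X : Type*} [MetricSpace X]

/-- The restriction of a curve to `[s, t]`, reparametrized to start at `0`. It is a curve in the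
sense of `Curve`, so 1-modulus estimates apply to it. -/
def Curve.subcurve (γ : Curve X) (s t : ℝ) (hs : 0 ≤ s) (hst : s ≤ t) (ht : t ≤ γ.len) :
    Curve X where
  len := t - s
  len_nonneg := sub_nonneg.2 hst
  toFun r := γ.toFun (r + s)
  lipschitzOn := by
    have hmaps : MapsTo (· + s) (Icc 0 (t - s)) (Icc 0 γ.len) := fun r hr =>
      ⟨by linarith [hr.1], by linarith [hr.2]⟩
    simpa [Function.comp_def] using
      γ.lipschitzOn.comp (isometry_add_right s).lipschitz.lipschitzOnWith hmaps

theorem Curve.IsIn.subcurve {γ : Curve X} {W : Set X} (hγ : γ.IsIn W) {s t : ℝ} (hs : 0 ≤ s)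
    (hst : s ≤ t) (ht : t ≤ γ.len) : (γ.subcurve s t hs hst ht).IsIn W := fun r hr =>
  hγ (r + s) ⟨add_nonneg hr.1 hs, (le_sub_iff_add_le.1 hr.2).trans ht⟩

theorem curveLintegral_subcurve (g : X → ℝ≥0∞) (γ : Curve X) {s t : ℝ} (hs : 0 ≤ s) (hst : s ≤ t)
    (ht : t ≤ γ.len) :
    curveLintegral g (γ.subcurve s t hs hst ht) = ∫⁻ r in Icc s t, g (γ.toFun r) := by
  have h := (measurePreserving_add_right (volume : Measure ℝ) s).setLIntegral_comp_preimage_emb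
    (measurableEmbedding_addRight s) (fun r => g (γ.toFun r)) (Icc s t)
  rwa [Set.preimage_add_const_Icc, sub_self] at h

theorem upperGradIneq_iff_enorm_sub_le {g : X → ℝ≥0∞} {u : X → ℝ} {γ : Curve X} :
    UpperGradIneq g u γ ↔
      ‖u (γ.toFun γ.len) - u (γ.toFun 0)‖ₑ ≤ curveLintegral g γ := by
  rw [UpperGradIneq, Real.enorm_eq_ofReal_abs, abs_sub_comm]

theorem Curve.IsNonconstant.of_not_upperGradIneq {g : X → ℝ≥0∞} {u : X → ℝ} {γ : Curve X}
    (h : ¬UpperGradIneq g u γ) : γ.IsNonconstant := by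
  refine ⟨0, left_mem_Icc.2 γ.len_nonneg, γ.len, right_mem_Icc.2 γ.len_nonneg, fun heq => h ?_⟩
  simp [UpperGradIneq, heq]

variable [MeasurableSpace X] {μ : Measure X}

theorem mod1_le_of_forall_exists {Γ Γ' : Set (Curve X)}
    (h : ∀ γ ∈ Γ', ∃ γ' ∈ Γ, ∀ ρ : X → ℝ≥0∞, curveLintegral ρ γ' ≤ curveLintegral ρ γ) :
    mod1 μ Γ' ≤ mod1 μ Γ := by
  refine le_iInf₂ fun ρ hρ => iInf₂_le ρ ⟨hρ.1, fun γ hγ => ?_⟩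
  obtain ⟨γ', hγ', hle⟩ := h γ hγ
  exact (hρ.2 γ' hγ').trans (hle ρ)

theorem mod1_mono {Γ Γ' : Set (Curve X)} (h : Γ' ⊆ Γ) : mod1 μ Γ' ≤ mod1 μ Γ :=
  mod1_le_of_forall_exists fun γ hγ => ⟨γ, h hγ, fun _ => le_rfl⟩

theorem mod1_empty : mod1 μ ∅ = 0 :=
  le_antisymm (iInf₂_le_of_le 0 ⟨measurable_zero, by simp⟩ (by simp)) zero_le

theorem mod1_union_le (Γ Γ' : Set (Curve X)) :
    mod1 μ (Γ ∪ Γ') ≤ mod1 μ Γ + mod1 μ Γ' := by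
  refine ENNReal.le_iInf₂_add_iInf₂ fun ρ hρ ρ' hρ' => ?_
  rw [← lintegral_add_left hρ.1]
  refine iInf₂_le (fun x => ρ x + ρ' x) ⟨hρ.1.add hρ'.1, ?_⟩
  rintro γ (hγ | hγ)
  · exact (hρ.2 γ hγ).trans (lintegral_mono fun _ => le_self_add)
  · exact (hρ'.2 γ hγ).trans (lintegral_mono fun _ => le_add_self)

variable (μ) in
/-- The filter of curve families whose complement has zero 1-modulus, so that
`∀ᶠ γ in aeCurve μ, p γ` reads "`p` holds for 1-almost every curve". -/
def aeCurve : Filter (Curve X) :=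
  Filter.comk (fun Γ => mod1 μ Γ = 0) mod1_empty
    (fun _ hΓ _ hsub => le_zero_iff.1 ((mod1_mono hsub).trans_eq hΓ))
    (fun Γ hΓ Γ' hΓ' => le_zero_iff.1 ((mod1_union_le Γ Γ').trans_eq (by rw [hΓ, hΓ', add_zero])))

theorem eventually_aeCurve {p : Curve X → Prop} :
    (∀ᶠ γ in aeCurve μ, p γ) ↔ mod1 μ {γ | ¬p γ} = 0 :=
  Iff.rfl

theorem eventually_aeCurve_forall_subcurve {p : Curve X → Prop} (h : ∀ᶠ γ in aeCurve μ, p γ) :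
    ∀ᶠ γ in aeCurve μ, ∀ (s t : ℝ) (hs : 0 ≤ s) (hst : s ≤ t) (ht : t ≤ γ.len),
      p (γ.subcurve s t hs hst ht) := by
  refine le_zero_iff.1 ((mod1_le_of_forall_exists fun γ hγ => ?_).trans_eq h)
  simp only [mem_ofPred_eq, mem_compl_iff, not_forall] at hγ
  obtain ⟨s, t, hs, hst, ht, hp⟩ := hγ
  refine ⟨_, hp, fun ρ => ?_⟩
  rw [curveLintegral_subcurve]
  exact lintegral_mono_set (Icc_subset_Icc hs ht)

theorem eventually_aeCurve_curveLintegral_ne_top {ρ : X → ℝ≥0∞} (hρ : Measurable ρ)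
    (hfin : ∫⁻ x, ρ x ∂μ ≠ ⊤) : ∀ᶠ γ in aeCurve μ, curveLintegral ρ γ ≠ ⊤ := by
  have hle (n : ℕ) : mod1 μ {γ | ¬curveLintegral ρ γ ≠ ⊤} ≤ (n : ℝ≥0∞)⁻¹ * ∫⁻ x, ρ x ∂μ := by
    rw [← lintegral_const_mul _ hρ]
    refine iInf₂_le (fun x => (n : ℝ≥0∞)⁻¹ * ρ x) ⟨hρ.const_mul _, fun γ hγ => ?_⟩
    have htop : curveLintegral ρ γ = ⊤ := not_not.1 hγ
    calc (1 : ℝ≥0∞) ≤ (n : ℝ≥0∞)⁻¹ * curveLintegral ρ γ := by simp [htop, ENNReal.mul_top]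
      _ ≤ _ := lintegral_const_mul_le _ _
  have hlim := ENNReal.Tendsto.mul_const ENNReal.tendsto_inv_nat_nhds_zero (Or.inr hfin)
  rw [zero_mul] at hlim
  exact le_zero_iff.1 (ge_of_tendsto' hlim hle)

theorem isWeakUpperGradientOn_iff {g : X → ℝ≥0∞} {u : X → ℝ} {W : Set X} :
    IsWeakUpperGradientOn μ g u W ↔
      Measurable g ∧ ∀ᶠ γ in aeCurve μ, γ.IsIn W → UpperGradIneq g u γ := by
  have hset : {γ : Curve X | γ.IsNonconstant ∧ γ.IsIn W ∧ ¬UpperGradIneq g u γ} =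
      {γ | ¬(γ.IsIn W → UpperGradIneq g u γ)} := by
    ext γ
    simp only [mem_ofPred_eq, Classical.not_imp, and_iff_right_iff_imp]
    exact fun h => .of_not_upperGradIneq h.2
  rw [IsWeakUpperGradientOn, hset, eventually_aeCurve]

end Curves

section CurveDerivative

variable {X : Type*} [MetricSpace X] {W : Set X} {u : X → ℝ}

theorem LocLipschitzOn.locallyLipschitzOn (hu : LocLipschitzOn u W) : LocallyLipschitzOn W u :=
  fun _ hx => hu _ hx

theorem LocLipschitzOn.exists_lipschitzOnWith_comp_curve (hu : LocLipschitzOn u W) {γ : Curve X}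
    (hγ : γ.IsIn W) : ∃ K, LipschitzOnWith K (u ∘ γ.toFun) (Icc 0 γ.len) := by
  have hcompact : IsCompact (γ.toFun '' Icc 0 γ.len) :=
    isCompact_Icc.image_of_continuousOn γ.lipschitzOn.continuousOn
  obtain ⟨K, hK⟩ := (hu.locallyLipschitzOn.mono
    (image_subset_iff.2 hγ)).exists_lipschitzOnWith_of_compact hcompact
  exact ⟨K * 1, hK.comp γ.lipschitzOn (mapsTo_image _ _)⟩

theorem LocLipschitzOn.absolutelyContinuousOnInterval_comp_curve (hu : LocLipschitzOn u W)
    {γ : Curve X} (hγ : γ.IsIn W) : AbsolutelyContinuousOnInterval (u ∘ γ.toFun) 0 γ.len := by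
  obtain ⟨K, hK⟩ := hu.exists_lipschitzOnWith_comp_curve hγ
  rw [← uIcc_of_le γ.len_nonneg] at hK
  exact hK.absolutelyContinuousOnInterval

theorem LocLipschitzOn.ae_differentiableAt_comp_curve (hu : LocLipschitzOn u W) {γ : Curve X}
    (hγ : γ.IsIn W) :
    ∀ᵐ t ∂volume.restrict (Icc 0 γ.len), DifferentiableAt ℝ (u ∘ γ.toFun) t := by
  rw [ae_restrict_iff' measurableSet_Icc, ← uIcc_of_le γ.len_nonneg]
  exact (hu.absolutelyContinuousOnInterval_comp_curve hγ).ae_differentiableAt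

theorem Curve.IsIn.tendsto_nhdsWithin {γ : Curve X} (hγ : γ.IsIn W) {t : ℝ}
    (ht : t ∈ Ioo 0 γ.len) : Tendsto γ.toFun (𝓝 t) (𝓝[W] γ.toFun t) := by
  refine tendsto_nhdsWithin_iff.2 ⟨?_, ?_⟩
  · exact γ.lipschitzOn.continuousOn.continuousAt (Icc_mem_nhds ht.1 ht.2)
  · filter_upwards [Icc_mem_nhds ht.1 ht.2] using hγ

variable [MeasurableSpace X] {μ : Measure X} {g h : X → ℝ≥0∞} {v m : X → ℝ}

theorem isWeakUpperGradientOn_of_eventually_enorm_deriv_le (hu : LocLipschitzOn u W)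
    (hg : Measurable g) (h : ∀ᶠ γ in aeCurve μ, γ.IsIn W →
      ∀ᵐ t ∂volume.restrict (Icc 0 γ.len), ‖deriv (u ∘ γ.toFun) t‖ₑ ≤ g (γ.toFun t)) :
    IsWeakUpperGradientOn μ g u W := by
  refine isWeakUpperGradientOn_iff.2 ⟨hg, h.mono fun γ hderiv hγ => ?_⟩
  rw [upperGradIneq_iff_enorm_sub_le]
  exact (enorm_sub_le_lintegral_enorm_deriv γ.len_nonneg
    (hu.absolutelyContinuousOnInterval_comp_curve hγ)).trans (lintegral_mono_ae (hderiv hγ))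

variable [BorelSpace X]

theorem Curve.aemeasurable_comp (γ : Curve X) (hg : Measurable g) :
    AEMeasurable (g ∘ γ.toFun) (volume.restrict (Icc 0 γ.len)) :=
  hg.comp_aemeasurable (γ.lipschitzOn.continuousOn.aemeasurable measurableSet_Icc)

theorem IsWeakUpperGradientOn.eventually_enorm_deriv_le (hW : MeasurableSet W)
    (hg : IsWeakUpperGradientOn μ g u W) (hfin : ∫⁻ x in W, g x ∂μ ≠ ⊤) :
    ∀ᶠ γ in aeCurve μ, γ.IsIn W →
      ∀ᵐ t ∂volume.restrict (Icc 0 γ.len), ‖deriv (u ∘ γ.toFun) t‖ₑ ≤ g (γ.toFun t) := by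
  obtain ⟨hmeas, hineq⟩ := isWeakUpperGradientOn_iff.1 hg
  rw [← lintegral_indicator hW] at hfin
  filter_upwards [eventually_aeCurve_forall_subcurve hineq,
    eventually_aeCurve_curveLintegral_ne_top (hmeas.indicator hW) hfin] with γ hsub hfinγ hγ
  refine ae_enorm_deriv_le_of_forall_enorm_sub_le (γ.aemeasurable_comp hmeas) ?_ ?_
  · convert hfinγ using 1
    exact setLIntegral_congr_fun measurableSet_Icc fun t ht => (indicator_of_mem (hγ t ht) g).symm
  · intro s t hs hst ht
    have hrestrict := upperGradIneq_iff_enorm_sub_le.1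
      (hsub s t hs hst ht (hγ.subcurve hs hst ht))
    rw [curveLintegral_subcurve] at hrestrict
    simpa [Curve.subcurve] using hrestrict

theorem LocLipschitzOn.isWeakUpperGradientOn_piecewise {A : Set X} [∀ x, Decidable (x ∈ A)]
    (hm : LocLipschitzOn m W) (hu : LocLipschitzOn u W) (hv : LocLipschitzOn v W)
    (hW : MeasurableSet W) (hA : MeasurableSet A)
    (hg : IsWeakUpperGradientOn μ g u W) (hgfin : ∫⁻ x in W, g x ∂μ ≠ ⊤)
    (hh : IsWeakUpperGradientOn μ h v W) (hhfin : ∫⁻ x in W, h x ∂μ ≠ ⊤)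
    (hmu : ∀ x ∈ W ∩ A, IsLocalExtrOn (m - u) W x)
    (hmv : ∀ x ∈ W \ A, IsLocalExtrOn (m - v) W x) :
    IsWeakUpperGradientOn μ (A.piecewise g h) m W := by
  refine isWeakUpperGradientOn_of_eventually_enorm_deriv_le hm (hg.1.piecewise hA hh.1) ?_
  filter_upwards [hg.eventually_enorm_deriv_le hW hgfin, hh.eventually_enorm_deriv_le hW hhfin]
    with γ hgγ hhγ hγ
  have hudiff := hu.ae_differentiableAt_comp_curve hγ
  have hvdiff := hv.ae_differentiableAt_comp_curve hγ
  have hmdiff := hm.ae_differentiableAt_comp_curve hγ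
  replace hgγ := hgγ hγ
  replace hhγ := hhγ hγ
  rw [← restrict_Ioo_eq_restrict_Icc] at hgγ hhγ hudiff hvdiff hmdiff ⊢
  filter_upwards [hgγ, hhγ, hudiff, hvdiff, hmdiff, ae_restrict_mem measurableSet_Ioo]
    with t hgt hht hut hvt hmt ht
  have htW : γ.toFun t ∈ W := hγ t (Ioo_subset_Icc_self ht)
  by_cases htA : γ.toFun t ∈ A
  · rw [piecewise_eq_of_mem _ _ _ htA, deriv_eq_deriv_of_isLocalExtr_sub hmt hut
      ((hmu _ ⟨htW, htA⟩).comp_tendsto (hγ.tendsto_nhdsWithin ht))]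
    exact hgt
  · rw [piecewise_eq_of_notMem _ _ _ htA, deriv_eq_deriv_of_isLocalExtr_sub hmt hvt
      ((hmv _ ⟨htW, htA⟩).comp_tendsto (hγ.tendsto_nhdsWithin ht))]
    exact hht

end CurveDerivative

section Energy

variable {X : Type*} [MetricSpace X] {W W' : Set X} {u v : X → ℝ}

theorem LocLipschitzOn.mono (hu : LocLipschitzOn u W') (h : W ⊆ W') : LocLipschitzOn u W :=
  fun _ hx => hu.locallyLipschitzOn.mono h hx

theorem LocLipschitzOn.continuousOn (hu : LocLipschitzOn u W) : ContinuousOn u W :=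
  hu.locallyLipschitzOn.continuousOn

theorem LocLipschitzOn.comp₂ {φ : ℝ × ℝ → ℝ} {C : ℝ≥0} (hφ : LipschitzWith C φ)
    (hu : LocLipschitzOn u W) (hv : LocLipschitzOn v W) :
    LocLipschitzOn (fun x => φ (u x, v x)) W := by
  intro x hx
  obtain ⟨K, s, hs, hK⟩ := hu x hx
  obtain ⟨L, t, ht, hL⟩ := hv x hx
  exact ⟨_, s ∩ t, inter_mem hs ht, hφ.comp_lipschitzOnWith
    ((hK.mono inter_subset_left).prodMk (hL.mono inter_subset_right))⟩

theorem LocLipschitzOn.min (hu : LocLipschitzOn u W) (hv : LocLipschitzOn v W) :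
    LocLipschitzOn (fun x => min (u x) (v x)) W :=
  hu.comp₂ lipschitzWith_min hv

theorem LocLipschitzOn.max (hu : LocLipschitzOn u W) (hv : LocLipschitzOn v W) :
    LocLipschitzOn (fun x => max (u x) (v x)) W :=
  hu.comp₂ lipschitzWith_max hv

variable [MeasurableSpace X] {μ : Measure X}

theorem IsWeakUpperGradientOn.mono {g : X → ℝ≥0∞} (hg : IsWeakUpperGradientOn μ g u W')
    (h : W ⊆ W') : IsWeakUpperGradientOn μ g u W :=
  isWeakUpperGradientOn_iff.2 ((isWeakUpperGradientOn_iff.1 hg).imp_right fun hineq =>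
    hineq.mono fun _ hγ hγW => hγ fun s hs => h (hγW s hs))

theorem gradEnergy_le {g : X → ℝ≥0∞} (hg : IsWeakUpperGradientOn μ g u W) :
    gradEnergy μ u W ≤ ∫⁻ x in W, g x ∂μ :=
  iInf₂_le g hg

theorem gradEnergy_mono (h : W ⊆ W') : gradEnergy μ u W ≤ gradEnergy μ u W' :=
  le_iInf₂ fun _ hg => (gradEnergy_le (hg.mono h)).trans (lintegral_mono_set h)

theorem gradEnergy_min_add_gradEnergy_max_le [BorelSpace X] (hW : IsOpen W)
    (hu : LocLipschitzOn u W) (hv : LocLipschitzOn v W) :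
    gradEnergy μ (fun x => min (u x) (v x)) W + gradEnergy μ (fun x => max (u x) (v x)) W ≤
      gradEnergy μ u W + gradEnergy μ v W := by
  classical
  refine ENNReal.le_iInf₂_add_iInf₂ fun g hg h hh => ?_
  obtain hgtop | hgfin := eq_or_ne (∫⁻ x in W, g x ∂μ) ⊤
  · simp [hgtop]
  obtain hhtop | hhfin := eq_or_ne (∫⁻ x in W, h x ∂μ) ⊤
  · simp [hhtop]
  set A : Set X := W ∩ (v - u) ⁻¹' Ioi 0 with hAdef
  have hA : MeasurableSet A :=
    ((hv.continuousOn.sub hu.continuousOn).isOpen_inter_preimage hW isOpen_Ioi).measurableSet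
  have hlt : ∀ x ∈ W ∩ A, u x ≤ v x := fun x hx => (sub_pos.1 hx.2.2).le
  have hle : ∀ x ∈ W \ A, v x ≤ u x := fun x hx => by simpa [hAdef, hx.1] using hx.2
  have hmin : IsWeakUpperGradientOn μ (A.piecewise g h) (fun x => min (u x) (v x)) W :=
    (hu.min hv).isWeakUpperGradientOn_piecewise hu hv hW.measurableSet hA hg hgfin hh hhfin
      (fun x hx => IsExtrOn.localize (.inr fun y _ => by simp [hlt x hx]))
      (fun x hx => IsExtrOn.localize (.inr fun y _ => by simp [hle x hx]))
  have hmax : IsWeakUpperGradientOn μ (A.piecewise h g) (fun x => max (u x) (v x)) W :=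
    (hu.max hv).isWeakUpperGradientOn_piecewise hv hu hW.measurableSet hA hh hhfin hg hgfin
      (fun x hx => IsExtrOn.localize (.inl fun y _ => by simp [hlt x hx]))
      (fun x hx => IsExtrOn.localize (.inl fun y _ => by simp [hle x hx]))
  refine (add_le_add (gradEnergy_le hmin) (gradEnergy_le hmax)).trans_eq ?_
  rw [← lintegral_add_left hmin.1, ← lintegral_add_left hg.1]
  refine lintegral_congr fun x => ?_
  by_cases hx : x ∈ A
  · simp [hx]
  · simp [hx, add_comm]

end Energy

section Variation

variable {X : Type*} [MetricSpace X] [MeasurableSpace X] {μ : Measure X} {W W' : Set X} {v : X → ℝ}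

theorem variationOn_le_liminf {u : ℕ → X → ℝ} (hu : ∀ i, LocLipschitzOn (u i) W)
    (huv : TendstoL1loc μ W u v) :
    variationOn μ v W ≤ liminf (fun i => gradEnergy μ (u i) W) atTop :=
  iInf₂_le u ⟨hu, huv⟩

theorem TendstoL1loc.mono {u : ℕ → X → ℝ} (hu : TendstoL1loc μ W' u v) (h : W ⊆ W') :
    TendstoL1loc μ W u v :=
  fun V hV hVc hVW => hu V hV hVc (hVW.trans h)

theorem variationOn_mono (h : W ⊆ W') : variationOn μ v W ≤ variationOn μ v W' :=
  le_iInf₂ fun _ hu =>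
    (variationOn_le_liminf (fun i => (hu.1 i).mono h) (hu.2.mono h)).trans
      (liminf_le_liminf (Eventually.of_forall fun _ => gradEnergy_mono h))

theorem totalVar_eq_variationOn (hW : IsOpen W) : totalVar μ v W = variationOn μ v W :=
  le_antisymm (iInf₂_le W ⟨hW, Subset.rfl⟩) (le_iInf₂ fun _ hV => variationOn_mono hV.2)

theorem exists_exhaustion_isOpen_isCompact_closure {Y : Type*} [TopologicalSpace Y] [T2Space Y]
    [LocallyCompactSpace Y] [SecondCountableTopology Y] {W : Set Y} (hW : IsOpen W) :
    ∃ V : ℕ → Set Y, (∀ n, IsOpen (V n)) ∧ (∀ n, IsCompact (closure (V n))) ∧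
      (∀ n, closure (V n) ⊆ W) ∧ ∀ K, IsCompact K → K ⊆ W → ∀ᶠ n in atTop, K ⊆ V n := by
  have := hW.locallyCompactSpace
  let K := CompactExhaustion.choice W
  have hK n : IsCompact (Subtype.val '' K n : Set Y) := (K.isCompact n).image continuous_subtype_val
  have hsub n : closure (Subtype.val '' interior (K n) : Set Y) ⊆ Subtype.val '' K n :=
    closure_minimal (image_mono interior_subset) (hK n).isClosed
  refine ⟨fun n => Subtype.val '' interior (K n),
    fun n => hW.isOpenMap_subtype_val _ isOpen_interior,
    fun n => (hK n).of_isClosed_subset isClosed_closure (hsub n),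
    fun n => (hsub n).trans (Subtype.coe_image_subset _ _), fun L hL hLW => ?_⟩
  have hL' : IsCompact (Subtype.val ⁻¹' L : Set W) :=
    Topology.IsInducing.subtypeVal.isCompact_preimage_iff (by simpa using hLW) |>.2 hL
  obtain ⟨N, hN⟩ := K.exists_superset_of_isCompact hL'
  filter_upwards [eventually_ge_atTop (N + 1)] with n hn x hx
  exact ⟨⟨x, hLW hx⟩, interior_mono (K.subset hn) (K.subset_interior_succ N (hN hx)), rfl⟩

theorem exists_seq_gradEnergy_le [LocallyCompactSpace X] [SecondCountableTopology X]
    (hW : IsOpen W) (hv : variationOn μ v W ≠ ⊤) :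
    ∃ u : ℕ → X → ℝ, (∀ i, LocLipschitzOn (u i) W) ∧ TendstoL1loc μ W u v ∧
      ∀ i, gradEnergy μ (u i) W ≤ variationOn μ v W + (i : ℝ≥0∞)⁻¹ := by
  obtain ⟨V, hVo, hVc, hVW, hV⟩ := exists_exhaustion_isOpen_isCompact_closure hW
  have hex (n : ℕ) : ∃ f : X → ℝ, LocLipschitzOn f W ∧
      ∫⁻ x in V n, ENNReal.ofReal |f x - v x| ∂μ ≤ (n : ℝ≥0∞)⁻¹ ∧
      gradEnergy μ f W ≤ variationOn μ v W + (n : ℝ≥0∞)⁻¹ := by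
    have hpos : 0 < (n : ℝ≥0∞)⁻¹ := by simp
    have hlt := ENNReal.lt_add_right hv hpos.ne'
    simp only [variationOn, iInf_lt_iff] at hlt
    obtain ⟨u, ⟨hu, huv⟩, hlt⟩ := hlt
    have hsmall := (huv (V n) (hVo n) (hVc n) (hVW n)).eventually_lt_const hpos
    obtain ⟨i, henergy, hdist⟩ :=
      ((frequently_lt_of_liminf_lt (by isBoundedDefault) hlt).and_eventually hsmall).exists
    exact ⟨u i, hu i, hdist.le, henergy.le⟩
  choose u hu hdist henergy using hex
  refine ⟨u, hu, fun W' _ hW'c hW'W => ?_, henergy⟩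
  refine tendsto_of_tendsto_of_tendsto_of_le_of_le' tendsto_const_nhds
    ENNReal.tendsto_inv_nat_nhds_zero (Eventually.of_forall fun _ => zero_le) ?_
  filter_upwards [hV _ hW'c hW'W] with n hn
  exact (lintegral_mono_set (subset_closure.trans hn)).trans (hdist n)

end Variation

section LatticeConvergence

-- The functions `f`, `a`, `b` need not be measurable, and the distance to the indicator of an
-- arbitrary set is not. Their lower integrals are not subadditive, so `f ≤ a + b` would not do;
-- where both summands are needed, `a` is replaced by the measurable minorant `a'`.
theorem lintegral_le_add_of_forall_mem_le {α : Type*} [MeasurableSpace α] {ν : Measure α}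
    {f a a' b : α → ℝ≥0∞} {P : Set α} (hP : NullMeasurableSet P ν) (ha' : AEMeasurable a' ν)
    (ha'a : a' ≤ a) (hfa : ∀ x ∈ P, f x ≤ a x) (hfb : ∀ x ∉ P, f x ≤ a' x + b x) :
    ∫⁻ x, f x ∂ν ≤ ∫⁻ x, a x ∂ν + ∫⁻ x, b x ∂ν := by
  have hsplit (k : α → ℝ≥0∞) : ∫⁻ x, k x ∂ν = ∫⁻ x in P, k x ∂ν + ∫⁻ x in Pᶜ, k x ∂ν := by
    have h := Measure.restrict_inter_add_sdiff₀ univ hP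
    rw [univ_inter, ← compl_eq_univ_sdiff, Measure.restrict_univ] at h
    rw [← lintegral_add_measure, h]
  calc ∫⁻ x, f x ∂ν = ∫⁻ x in P, f x ∂ν + ∫⁻ x in Pᶜ, f x ∂ν := hsplit f
    _ ≤ ∫⁻ x in P, a x ∂ν + ∫⁻ x in Pᶜ, a' x + b x ∂ν := by
      refine add_le_add (lintegral_mono_ae ?_) (lintegral_mono_ae ?_)
      · exact (ae_restrict_mem₀ hP).mono hfa
      · exact (ae_restrict_mem₀ hP.compl).mono hfb
    _ = ∫⁻ x in P, a x ∂ν + (∫⁻ x in Pᶜ, a' x ∂ν + ∫⁻ x in Pᶜ, b x ∂ν) := by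
      rw [lintegral_add_left' ha'.restrict]
    _ ≤ ∫⁻ x in P, a x ∂ν + (∫⁻ x in Pᶜ, a x ∂ν + ∫⁻ x, b x ∂ν) := by
      gcongr
      · exact ha'a _
      · exact Measure.restrict_le_self
    _ = ∫⁻ x, a x ∂ν + ∫⁻ x, b x ∂ν := by rw [← add_assoc, ← hsplit a]

variable {α : Type*} [MeasurableSpace α] {ν : Measure α} {E' E : Set α} {u v : α → ℝ}

theorem abs_max_sub_indicator_le_of_half_le {α : Type*} {E' E : Set α} (hE : E' ⊆ E) {x : α}
    {a b : ℝ} (ha : 1 / 2 ≤ a) (hba : b ≤ a) :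
    |max a b - E.indicator (fun _ => 1) x| ≤ |a - E'.indicator (fun _ => 1) x| := by
  rw [max_eq_left hba]
  by_cases hx' : x ∈ E'
  · simp [hx', hE hx']
  by_cases hx : x ∈ E
  · simpa [hx, hx', abs_of_nonneg (by linarith : 0 ≤ a)] using
      abs_sub_le_iff.2 ⟨by linarith, by linarith⟩
  · simp [hx, hx']

theorem abs_max_sub_indicator_le_of_imp_lt_half {α : Type*} {E : Set α} {x : α} {a b : ℝ}
    (h : b < a → a < 1 / 2) :
    |max a b - E.indicator (fun _ => 1) x| ≤
      min |a| |a - 1| + |b - E.indicator (fun _ => 1) x| := by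
  obtain hab | hba := le_or_gt a b
  · rw [max_eq_right hab]
    exact le_add_of_nonneg_left (by positivity)
  have ha : |a| ≤ |a - 1| := by
    rw [abs_of_neg (by linarith [h hba] : a - 1 < 0), abs_le]
    constructor <;> linarith [h hba]
  rw [max_eq_left hba.le, min_eq_left ha]
  by_cases hx : x ∈ E
  · simp only [hx, indicator_of_mem]
    rw [abs_of_neg (by linarith [h hba] : a - 1 < 0), abs_of_neg (by linarith [h hba] : b - 1 < 0)]
    linarith [abs_nonneg a]
  · simp [hx]

theorem lintegral_abs_max_sub_indicator_le (hE : E' ⊆ E) (hu : AEMeasurable u ν)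
    (hv : AEMeasurable v ν) :
    ∫⁻ x, ENNReal.ofReal |max (u x) (v x) - E.indicator (fun _ => 1) x| ∂ν ≤
      ∫⁻ x, ENNReal.ofReal |u x - E'.indicator (fun _ => 1) x| ∂ν +
        ∫⁻ x, ENNReal.ofReal |v x - E.indicator (fun _ => 1) x| ∂ν := by
  refine lintegral_le_add_of_forall_mem_le (P := {x | 1 / 2 ≤ u x} ∩ {x | v x < u x})
    (a' := fun x => ENNReal.ofReal (min |u x| |u x - 1|))
    ((nullMeasurableSet_le aemeasurable_const hu).inter (nullMeasurableSet_lt hv hu))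
    (by fun_prop) (fun x => ?_) (fun x hx => ?_) (fun x hx => ?_)
  · refine ENNReal.ofReal_le_ofReal ?_
    by_cases hx : x ∈ E' <;> simp [hx]
  · exact ENNReal.ofReal_le_ofReal
      (abs_max_sub_indicator_le_of_half_le hE hx.1 hx.2.le)
  · rw [← ENNReal.ofReal_add (by positivity) (abs_nonneg _)]
    refine ENNReal.ofReal_le_ofReal (abs_max_sub_indicator_le_of_imp_lt_half fun hvu => ?_)
    exact not_le.1 fun hux => hx ⟨hux, hvu⟩

theorem lintegral_abs_min_sub_indicator_le (hE : E' ⊆ E) (hu : AEMeasurable u ν)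
    (hv : AEMeasurable v ν) :
    ∫⁻ x, ENNReal.ofReal |min (u x) (v x) - E'.indicator (fun _ => 1) x| ∂ν ≤
      ∫⁻ x, ENNReal.ofReal |u x - E'.indicator (fun _ => 1) x| ∂ν +
        ∫⁻ x, ENNReal.ofReal |v x - E.indicator (fun _ => 1) x| ∂ν := by
  have hflip (F : Set α) (x : α) (r : ℝ) :
      |1 - r - Fᶜ.indicator (fun _ => 1) x| = |r - F.indicator (fun _ => 1) x| := by
    rw [abs_sub_comm r]
    by_cases hx : x ∈ F <;> simp [hx, abs_sub_comm]
  have h := lintegral_abs_max_sub_indicator_le (compl_subset_compl.2 hE) (hv.const_sub 1)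
    (hu.const_sub 1)
  simp only [max_sub_sub_left, hflip] at h
  simpa only [add_comm, min_comm] using h

end LatticeConvergence
section Convergence

variable {X : Type*} [MetricSpace X] [MeasurableSpace X] {μ : Measure X} {W : Set X}

theorem TendstoL1loc.of_le_add {u v m : ℕ → X → ℝ} {x y z : X → ℝ} (hu : TendstoL1loc μ W u x)
    (hv : TendstoL1loc μ W v y)
    (h : ∀ i, ∀ W', IsOpen W' → W' ⊆ W → ∫⁻ p in W', ENNReal.ofReal |m i p - z p| ∂μ ≤
      ∫⁻ p in W', ENNReal.ofReal |u i p - x p| ∂μ + ∫⁻ p in W', ENNReal.ofReal |v i p - y p| ∂μ) :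
    TendstoL1loc μ W m z := by
  intro W' hW' hW'c hW'W
  have hlim := (hu W' hW' hW'c hW'W).add (hv W' hW' hW'c hW'W)
  rw [add_zero] at hlim
  exact tendsto_of_tendsto_of_tendsto_of_le_of_le tendsto_const_nhds hlim (fun _ => zero_le)
    fun i => h i W' hW' (subset_closure.trans hW'W)

variable [BorelSpace X] {E' E : Set X} {u v : ℕ → X → ℝ}

theorem TendstoL1loc.max_indicator (hE : E' ⊆ E) (hu : ∀ i, ContinuousOn (u i) W)
    (hv : ∀ i, ContinuousOn (v i) W) (huE' : TendstoL1loc μ W u (E'.indicator fun _ => 1))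
    (hvE : TendstoL1loc μ W v (E.indicator fun _ => 1)) :
    TendstoL1loc μ W (fun i x => max (u i x) (v i x)) (E.indicator fun _ => 1) :=
  huE'.of_le_add hvE fun i _ hW' hW'W => lintegral_abs_max_sub_indicator_le hE
    (((hu i).mono hW'W).aemeasurable hW'.measurableSet)
    (((hv i).mono hW'W).aemeasurable hW'.measurableSet)

theorem TendstoL1loc.min_indicator (hE : E' ⊆ E) (hu : ∀ i, ContinuousOn (u i) W)
    (hv : ∀ i, ContinuousOn (v i) W) (huE' : TendstoL1loc μ W u (E'.indicator fun _ => 1))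
    (hvE : TendstoL1loc μ W v (E.indicator fun _ => 1)) :
    TendstoL1loc μ W (fun i x => min (u i x) (v i x)) (E'.indicator fun _ => 1) :=
  huE'.of_le_add hvE fun i _ hW' hW'W => lintegral_abs_min_sub_indicator_le hE
    (((hu i).mono hW'W).aemeasurable hW'.measurableSet)
    (((hv i).mono hW'W).aemeasurable hW'.measurableSet)

end Convergence

section Liminf

variable {ι : Type*} {l : Filter ι}

theorem liminf_add_liminf_le_liminf_add (a b : ι → ℝ≥0∞) :
    liminf a l + liminf b l ≤ liminf (a + b) l := by
  rw [liminf_eq_iSup_iInf, liminf_eq_iSup_iInf]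
  refine ENNReal.biSup_add_biSup_le' ⟨univ, univ_mem⟩ ⟨univ, univ_mem⟩ fun s hs t ht => ?_
  refine le_liminf_of_le (by isBoundedDefault) ?_
  filter_upwards [hs, ht] with i his hit
  exact add_le_add (iInf₂_le i his) (iInf₂_le i hit)

theorem liminf_le_of_add_le_add [l.NeBot] {a b δ e : ι → ℝ≥0∞} {p q ε : ℝ≥0∞} (hq : q ≠ ⊤)
    (h : ∀ i, a i + b i ≤ p + δ i + e i) (hδ : Tendsto δ l (𝓝 0)) (hb : q ≤ liminf b l)
    (he : liminf e l ≤ q + ε) : liminf a l ≤ p + ε := by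
  refine ENNReal.le_of_add_le_add_right hq ?_
  calc liminf a l + q ≤ liminf a l + liminf b l := by gcongr
    _ ≤ liminf (a + b) l := liminf_add_liminf_le_liminf_add a b
    _ ≤ liminf ((fun i => p + e i) + δ) l :=
      liminf_le_liminf (Eventually.of_forall fun i => (h i).trans_eq (add_right_comm _ _ _))
    _ = p + liminf e l := by
      rw [ENNReal.liminf_add_of_right_tendsto_zero hδ,
        liminf_const_add l e p (by isBoundedDefault) (by isBoundedDefault)]
    _ ≤ p + (q + ε) := by gcongr
    _ = p + ε + q := by rw [add_comm q, add_assoc]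

end Liminf

theorem almost_optimal_sequences_general [LocallyCompactSpace X] [SecondCountableTopology X]
    (μ : Measure X) (W : Set X) (hW : IsOpen W) (E' E : Set X) (hsub : E' ⊆ E)
    (hE' : perimeter μ E' W < ⊤) (hE : perimeter μ E W < ⊤) (ε : ℝ≥0∞)
    (w : ℕ → X → ℝ) (hlip : ∀ i, LocLipschitzOn (w i) W)
    (hconv : TendstoL1loc μ W w (E.indicator fun _ => 1))
    (hen : liminf (fun i => gradEnergy μ (w i) W) atTop ≤ perimeter μ E W + ε) :
    ∃ w' : ℕ → X → ℝ, (∀ i, LocLipschitzOn (w' i) W) ∧ (∀ i, ∀ x ∈ W, w' i x ≤ w i x) ∧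
      TendstoL1loc μ W w' (E'.indicator fun _ => 1) ∧
      liminf (fun i => gradEnergy μ (w' i) W) atTop ≤ perimeter μ E' W + ε := by
  simp only [perimeter, totalVar_eq_variationOn hW] at hE' hE hen ⊢
  obtain ⟨u, hu, huE', henergy⟩ := exists_seq_gradEnergy_le hW hE'.ne
  have hucont i := (hu i).continuousOn
  have hwcont i := (hlip i).continuousOn
  have hmax : variationOn μ (E.indicator fun _ => 1) W ≤
      liminf (fun i => gradEnergy μ (fun x => max (u i x) (w i x)) W) atTop :=
    variationOn_le_liminf (fun i => (hu i).max (hlip i))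
      (huE'.max_indicator hsub hucont hwcont hconv)
  have hlattice i : gradEnergy μ (fun x => min (u i x) (w i x)) W +
      gradEnergy μ (fun x => max (u i x) (w i x)) W ≤
        variationOn μ (E'.indicator fun _ => 1) W + (i : ℝ≥0∞)⁻¹ + gradEnergy μ (w i) W :=
    (gradEnergy_min_add_gradEnergy_max_le hW (hu i) (hlip i)).trans
      (add_le_add_left (henergy i) _)
  exact ⟨fun i x => min (u i x) (w i x), fun i => (hu i).min (hlip i),
    fun i x _ => min_le_right _ _, huE'.min_indicator hsub hucont hwcont hconv,
    liminf_le_of_add_le_add hE.ne hlattice ENNReal.tendsto_inv_nat_nhds_zero hmax hen⟩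

/-- **Lemma 3.4 (almost optimal sequences).** Given an almost optimal approximating
sequence for `E`, one can find a dominated almost optimal approximating sequence
for any subset `E' ⊆ E` of finite perimeter in `W`. -/
theorem almost_optimal_sequences
    [ProperSpace X] (μ : Measure X)
    (hball : ∀ (x : X) (r : ℝ), 0 < r → 0 < μ (ball x r) ∧ μ (ball x r) < ⊤)
    (W : Set X) (hW : IsOpen W) (E' E : Set X) (hsub : E' ⊆ E)
    (hE' : perimeter μ E' W < ⊤) (hE : perimeter μ E W < ⊤)
    (ε : ℝ) (hε : 0 ≤ ε)
    (w : ℕ → X → ℝ) (hlip : ∀ i, LocLipschitzOn (w i) W)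
    (hconv : TendstoL1loc μ W w (Set.indicator E fun _ => (1 : ℝ)))
    (hen : Filter.liminf (fun i => gradEnergy μ (w i) W) Filter.atTop ≤
      perimeter μ E W + ENNReal.ofReal ε) :
    ∃ w' : ℕ → X → ℝ,
      (∀ i, LocLipschitzOn (w' i) W) ∧
      (∀ i, ∀ x ∈ W, w' i x ≤ w i x) ∧
      TendstoL1loc μ W w' (Set.indicator E' fun _ => (1 : ℝ)) ∧
      Filter.liminf (fun i => gradEnergy μ (w' i) W) Filter.atTop ≤
        perimeter μ E' W + ENNReal.ofReal ε := by
  exact almost_optimal_sequences_general μ W hW E' E hsub hE' hE (ENNReal.ofReal ε) w hlip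
    hconv hen
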